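/- Let a₀, …, a₇ be the vertices of the unit cube [0,1]³ ⊂ ℝ³ (a_k has coordinates the binary digits of k) and let b = (1/2, 1/2, 1/2) be the center of the cube. Then the twelve tetrahedra conv{b,a₀,a₁,a₃}, conv{b,a₀,a₂,a₃}, conv{b,a₀,a₁,a₄}, conv{b,a₀,a₂,a₄}, conv{b,a₁,a₃,a₅}, conv{b,a₁,a₄,a₅}, conv{b,a₂,a₃,a₆}, conv{b,a₂,a₄,a₆}, conv{b,a₃,a₅,a₇}, conv{b,a₃,a₆,a₇}, conv{b,a₄,a₅,a₇}, conv{b,a₄,a₆,a₇} each have affinely independent vertex sets, their union is [0,1]³, and they have pairwise disjoint interiors. (This is the 'type E' triangulation of the cube: each of the six square faces is split into two triangles and the resulting twelve boundary triangles are coned from the center b.) -/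

import Mathlib

noncomputable section

/-- The point `(a, b, c)` of Euclidean 3-space. -/
def pt3 (a b c : ℝ) : EuclideanSpace ℝ (Fin 3) :=
  (WithLp.equiv 2 (Fin 3 → ℝ)).symm ![a, b, c]

/-- The unit cube `[0,1]³` in Euclidean 3-space. -/
def unitCube : Set (EuclideanSpace ℝ (Fin 3)) :=
  {x | ∀ i : Fin 3, x i ∈ Set.Icc (0 : ℝ) 1}

/-- The vertices `a₀, …, a₇` of the unit cube (`a_k` has coordinates the binary digits
of `k`). -/
def a₀ : EuclideanSpace ℝ (Fin 3) := pt3 0 0 0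
def a₁ : EuclideanSpace ℝ (Fin 3) := pt3 1 0 0
def a₂ : EuclideanSpace ℝ (Fin 3) := pt3 0 1 0
def a₃ : EuclideanSpace ℝ (Fin 3) := pt3 1 1 0
def a₄ : EuclideanSpace ℝ (Fin 3) := pt3 0 0 1
def a₅ : EuclideanSpace ℝ (Fin 3) := pt3 1 0 1
def a₆ : EuclideanSpace ℝ (Fin 3) := pt3 0 1 1
def a₇ : EuclideanSpace ℝ (Fin 3) := pt3 1 1 1

/-- The center `b = (1/2, 1/2, 1/2)` of the unit cube. -/
def bCtr : EuclideanSpace ℝ (Fin 3) := pt3 (1/2) (1/2) (1/2)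

/-- The tetrahedron `conv{p, q, r, s}`. -/
def tet (p q r s : EuclideanSpace ℝ (Fin 3)) : Set (EuclideanSpace ℝ (Fin 3)) :=
  convexHull ℝ {p, q, r, s}

/-- The 'type E' family of twelve tetrahedra: each square face of the cube is split into
two triangles and the twelve boundary triangles are coned from the center `b`. -/
def typeE : Fin 12 → Set (EuclideanSpace ℝ (Fin 3)) :=
  ![tet bCtr a₀ a₁ a₃, tet bCtr a₀ a₂ a₃, tet bCtr a₀ a₁ a₄, tet bCtr a₀ a₂ a₄,
    tet bCtr a₁ a₃ a₅, tet bCtr a₁ a₄ a₅, tet bCtr a₂ a₃ a₆, tet bCtr a₂ a₄ a₆,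
    tet bCtr a₃ a₅ a₇, tet bCtr a₃ a₆ a₇, tet bCtr a₄ a₅ a₇, tet bCtr a₄ a₆ a₇]

end

theorem mem_tet_iff (p q r s x : EuclideanSpace ℝ (Fin 3)) :
    x ∈ tet p q r s ↔ ∃ a b c d : ℝ, 0 ≤ a ∧ 0 ≤ b ∧ 0 ≤ c ∧ 0 ≤ d ∧ a + b + c + d = 1 ∧
      ∀ i, a * p i + b * q i + c * r i + d * s i = x i := by
  unfold tet
  constructor
  · intro h
    let C : Set (EuclideanSpace ℝ (Fin 3)) := {x | ∃ a b c d : ℝ, 0 ≤ a ∧ 0 ≤ b ∧ 0 ≤ c ∧ 0 ≤ d ∧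
      a + b + c + d = 1 ∧ ∀ i, a * p i + b * q i + c * r i + d * s i = x i}
    have hC : Convex ℝ C := by
      rintro x ⟨a, b, c, d, ha, hb, hc, hd, h1, hx⟩ y ⟨a', b', c', d', ha', hb', hc', hd', h1', hy⟩
        u v hu hv huv
      refine ⟨u * a + v * a', u * b + v * b', u * c + v * c', u * d + v * d', by positivity,
        by positivity, by positivity, by positivity, ?_, fun i => ?_⟩
      · linear_combination u * h1 + v * h1' + huv
      · simp only [PiLp.add_apply, PiLp.smul_apply, smul_eq_mul]
        linear_combination u * hx i + v * hy i
    refine convexHull_min ?_ hC h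
    rintro y (rfl | rfl | rfl | rfl)
    · exact ⟨1, 0, 0, 0, by simp⟩
    · exact ⟨0, 1, 0, 0, by simp⟩
    · exact ⟨0, 0, 1, 0, by simp⟩
    · exact ⟨0, 0, 0, 1, by simp⟩
  · rintro ⟨a, b, c, d, ha, hb, hc, hd, h1, hx⟩
    have hconv := convex_convexHull ℝ ({p, q, r, s} : Set (EuclideanSpace ℝ (Fin 3)))
    have key := hconv.sum_mem (t := Finset.univ) (w := ![a, b, c, d]) (z := ![p, q, r, s])
      (by intro i _; fin_cases i <;> simpa)
      (by simpa [Fin.sum_univ_four] using h1)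
      (by intro i _; apply subset_convexHull; fin_cases i <;> simp)
    convert key using 1
    ext i
    simp [Fin.sum_univ_four, ← hx i]

theorem affInd_of (p q r s : EuclideanSpace ℝ (Fin 3))
    (h : ∀ a b c d : ℝ, a + b + c + d = 0 →
      (∀ i, a * p i + b * q i + c * r i + d * s i = 0) → a = 0 ∧ b = 0 ∧ c = 0 ∧ d = 0) :
    AffineIndependent ℝ ![p, q, r, s] := by
  rw [affineIndependent_iff_of_fintype]
  intro w hw hs
  rw [Finset.weightedVSub_eq_linear_combination _ hw] at hs
  obtain ⟨h0, h1, h2, h3⟩ := h (w 0) (w 1) (w 2) (w 3)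
    (by simpa [Fin.sum_univ_four] using hw)
    (by
      intro i
      have := congrArg (fun y : EuclideanSpace ℝ (Fin 3) => y i) hs
      simpa [Fin.sum_univ_four] using this)
  intro i
  fin_cases i
  exacts [h0, h1, h2, h3]

theorem interior_push {S : Set (EuclideanSpace ℝ (Fin 3))} {P : ℝ → ℝ → ℝ → Prop}
    (hS : ∀ x, x ∈ S → P (x 0) (x 1) (x 2)) {x : EuclideanSpace ℝ (Fin 3)}
    (hx : x ∈ interior S) : ∃ e > 0,
      (P (x 0 + e) (x 1) (x 2) ∧ P (x 0 - e) (x 1) (x 2)) ∧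
      (P (x 0) (x 1 + e) (x 2) ∧ P (x 0) (x 1 - e) (x 2)) ∧
      (P (x 0) (x 1) (x 2 + e) ∧ P (x 0) (x 1) (x 2 - e)) := by
  obtain ⟨e, he, hb⟩ := Metric.isOpen_iff.1 isOpen_interior x hx
  have key : ∀ (i : Fin 3) (t : ℝ), |t| < e →
      x + EuclideanSpace.single i t ∈ S := by
    intro i t ht
    apply interior_subset
    apply hb
    simpa [Metric.mem_ball, dist_eq_norm] using ht
  have hp : |e / 2| < e := by rw [abs_of_pos (by positivity)]; linarith
  have hm : |-(e / 2)| < e := by rw [abs_neg]; exact hp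
  refine ⟨e / 2, by positivity, ⟨?_, ?_⟩, ⟨?_, ?_⟩, ⟨?_, ?_⟩⟩
  · simpa using hS _ (key 0 _ hp)
  · simpa [sub_eq_add_neg] using hS _ (key 0 _ hm)
  · simpa using hS _ (key 1 _ hp)
  · simpa [sub_eq_add_neg] using hS _ (key 1 _ hm)
  · simpa using hS _ (key 2 _ hp)
  · simpa [sub_eq_add_neg] using hS _ (key 2 _ hm)

/-- Barycentric coordinates: the tetrahedra are cut out by four linear inequalities. -/
def PE : Fin 12 → ℝ → ℝ → ℝ → Prop :=
  ![fun X Y Z => 0 ≤ 2 * Z ∧ 0 ≤ -X - Z + 1 ∧ 0 ≤ X - Y ∧ 0 ≤ Y - Z,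
    fun X Y Z => 0 ≤ 2 * Z ∧ 0 ≤ -Y - Z + 1 ∧ 0 ≤ -X + Y ∧ 0 ≤ X - Z,
    fun X Y Z => 0 ≤ 2 * Y ∧ 0 ≤ -X - Z + 1 ∧ 0 ≤ X - Y ∧ 0 ≤ -Y + Z,
    fun X Y Z => 0 ≤ 2 * X ∧ 0 ≤ -Y - Z + 1 ∧ 0 ≤ -X + Y ∧ 0 ≤ -X + Z,
    fun X Y Z => 0 ≤ -2 * X + 2 ∧ 0 ≤ -Y - Z + 1 ∧ 0 ≤ X + Y - 1 ∧ 0 ≤ X + Z - 1,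
    fun X Y Z => 0 ≤ 2 * Y ∧ 0 ≤ -Y - Z + 1 ∧ 0 ≤ -X - Y + 1 ∧ 0 ≤ X + Z - 1,
    fun X Y Z => 0 ≤ -2 * Y + 2 ∧ 0 ≤ -X - Z + 1 ∧ 0 ≤ X + Y - 1 ∧ 0 ≤ Y + Z - 1,
    fun X Y Z => 0 ≤ 2 * X ∧ 0 ≤ -X - Z + 1 ∧ 0 ≤ -X - Y + 1 ∧ 0 ≤ Y + Z - 1,
    fun X Y Z => 0 ≤ -2 * X + 2 ∧ 0 ≤ X - Z ∧ 0 ≤ X - Y ∧ 0 ≤ Y + Z - 1,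
    fun X Y Z => 0 ≤ -2 * Y + 2 ∧ 0 ≤ Y - Z ∧ 0 ≤ -X + Y ∧ 0 ≤ X + Z - 1,
    fun X Y Z => 0 ≤ -2 * Z + 2 ∧ 0 ≤ -X + Z ∧ 0 ≤ X - Y ∧ 0 ≤ Y + Z - 1,
    fun X Y Z => 0 ≤ -2 * Z + 2 ∧ 0 ≤ -Y + Z ∧ 0 ≤ -X + Y ∧ 0 ≤ X + Z - 1]

/-- Strict version. -/
def QE : Fin 12 → ℝ → ℝ → ℝ → Prop :=
  ![fun X Y Z => 0 < 2 * Z ∧ 0 < -X - Z + 1 ∧ 0 < X - Y ∧ 0 < Y - Z,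
    fun X Y Z => 0 < 2 * Z ∧ 0 < -Y - Z + 1 ∧ 0 < -X + Y ∧ 0 < X - Z,
    fun X Y Z => 0 < 2 * Y ∧ 0 < -X - Z + 1 ∧ 0 < X - Y ∧ 0 < -Y + Z,
    fun X Y Z => 0 < 2 * X ∧ 0 < -Y - Z + 1 ∧ 0 < -X + Y ∧ 0 < -X + Z,
    fun X Y Z => 0 < -2 * X + 2 ∧ 0 < -Y - Z + 1 ∧ 0 < X + Y - 1 ∧ 0 < X + Z - 1,
    fun X Y Z => 0 < 2 * Y ∧ 0 < -Y - Z + 1 ∧ 0 < -X - Y + 1 ∧ 0 < X + Z - 1,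
    fun X Y Z => 0 < -2 * Y + 2 ∧ 0 < -X - Z + 1 ∧ 0 < X + Y - 1 ∧ 0 < Y + Z - 1,
    fun X Y Z => 0 < 2 * X ∧ 0 < -X - Z + 1 ∧ 0 < -X - Y + 1 ∧ 0 < Y + Z - 1,
    fun X Y Z => 0 < -2 * X + 2 ∧ 0 < X - Z ∧ 0 < X - Y ∧ 0 < Y + Z - 1,
    fun X Y Z => 0 < -2 * Y + 2 ∧ 0 < Y - Z ∧ 0 < -X + Y ∧ 0 < X + Z - 1,
    fun X Y Z => 0 < -2 * Z + 2 ∧ 0 < -X + Z ∧ 0 < X - Y ∧ 0 < Y + Z - 1,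
    fun X Y Z => 0 < -2 * Z + 2 ∧ 0 < -Y + Z ∧ 0 < -X + Y ∧ 0 < X + Z - 1]

theorem mem0 (x : EuclideanSpace ℝ (Fin 3)) : x ∈ tet bCtr a₀ a₁ a₃ ↔ PE 0 (x 0) (x 1) (x 2) := by
  rw [mem_tet_iff]
  constructor
  · rintro ⟨a, b, c, d, ha, hb, hc, hd, h, hi⟩
    have h0 := hi 0
    have h1 := hi 1
    have h2 := hi 2
    simp [bCtr, a₀, a₁, a₃, pt3] at h0 h1 h2
    refine (show _ ∧ _ ∧ _ ∧ _ from ⟨?_, ?_, ?_, ?_⟩) <;> linarith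
  · rintro ⟨ha, hb, hc, hd⟩
    refine ⟨2 * x 2, -x 0 - x 2 + 1, x 0 - x 1, x 1 - x 2, ha, hb, hc, hd, by ring, fun i => ?_⟩
    fin_cases i <;> simp [bCtr, a₀, a₁, a₃, pt3] <;> ring

theorem mem1 (x : EuclideanSpace ℝ (Fin 3)) : x ∈ tet bCtr a₀ a₂ a₃ ↔ PE 1 (x 0) (x 1) (x 2) := by
  rw [mem_tet_iff]
  constructor
  · rintro ⟨a, b, c, d, ha, hb, hc, hd, h, hi⟩
    have h0 := hi 0
    have h1 := hi 1
    have h2 := hi 2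
    simp [bCtr, a₀, a₂, a₃, pt3] at h0 h1 h2
    refine (show _ ∧ _ ∧ _ ∧ _ from ⟨?_, ?_, ?_, ?_⟩) <;> linarith
  · rintro ⟨ha, hb, hc, hd⟩
    refine ⟨2 * x 2, -x 1 - x 2 + 1, -x 0 + x 1, x 0 - x 2, ha, hb, hc, hd, by ring, fun i => ?_⟩
    fin_cases i <;> simp [bCtr, a₀, a₂, a₃, pt3] <;> ring

theorem mem2 (x : EuclideanSpace ℝ (Fin 3)) : x ∈ tet bCtr a₀ a₁ a₄ ↔ PE 2 (x 0) (x 1) (x 2) := by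
  rw [mem_tet_iff]
  constructor
  · rintro ⟨a, b, c, d, ha, hb, hc, hd, h, hi⟩
    have h0 := hi 0
    have h1 := hi 1
    have h2 := hi 2
    simp [bCtr, a₀, a₁, a₄, pt3] at h0 h1 h2
    refine (show _ ∧ _ ∧ _ ∧ _ from ⟨?_, ?_, ?_, ?_⟩) <;> linarith
  · rintro ⟨ha, hb, hc, hd⟩
    refine ⟨2 * x 1, -x 0 - x 2 + 1, x 0 - x 1, -x 1 + x 2, ha, hb, hc, hd, by ring, fun i => ?_⟩
    fin_cases i <;> simp [bCtr, a₀, a₁, a₄, pt3] <;> ring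

theorem mem3 (x : EuclideanSpace ℝ (Fin 3)) : x ∈ tet bCtr a₀ a₂ a₄ ↔ PE 3 (x 0) (x 1) (x 2) := by
  rw [mem_tet_iff]
  constructor
  · rintro ⟨a, b, c, d, ha, hb, hc, hd, h, hi⟩
    have h0 := hi 0
    have h1 := hi 1
    have h2 := hi 2
    simp [bCtr, a₀, a₂, a₄, pt3] at h0 h1 h2
    refine (show _ ∧ _ ∧ _ ∧ _ from ⟨?_, ?_, ?_, ?_⟩) <;> linarith
  · rintro ⟨ha, hb, hc, hd⟩
    refine ⟨2 * x 0, -x 1 - x 2 + 1, -x 0 + x 1, -x 0 + x 2, ha, hb, hc, hd, by ring, fun i => ?_⟩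
    fin_cases i <;> simp [bCtr, a₀, a₂, a₄, pt3] <;> ring

theorem mem4 (x : EuclideanSpace ℝ (Fin 3)) : x ∈ tet bCtr a₁ a₃ a₅ ↔ PE 4 (x 0) (x 1) (x 2) := by
  rw [mem_tet_iff]
  constructor
  · rintro ⟨a, b, c, d, ha, hb, hc, hd, h, hi⟩
    have h0 := hi 0
    have h1 := hi 1
    have h2 := hi 2
    simp [bCtr, a₁, a₃, a₅, pt3] at h0 h1 h2
    refine (show _ ∧ _ ∧ _ ∧ _ from ⟨?_, ?_, ?_, ?_⟩) <;> linarith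
  · rintro ⟨ha, hb, hc, hd⟩
    refine ⟨-2 * x 0 + 2, -x 1 - x 2 + 1, x 0 + x 1 - 1, x 0 + x 2 - 1, ha, hb, hc, hd, by ring, fun i => ?_⟩
    fin_cases i <;> simp [bCtr, a₁, a₃, a₅, pt3] <;> ring

theorem mem5 (x : EuclideanSpace ℝ (Fin 3)) : x ∈ tet bCtr a₁ a₄ a₅ ↔ PE 5 (x 0) (x 1) (x 2) := by
  rw [mem_tet_iff]
  constructor
  · rintro ⟨a, b, c, d, ha, hb, hc, hd, h, hi⟩
    have h0 := hi 0
    have h1 := hi 1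
    have h2 := hi 2
    simp [bCtr, a₁, a₄, a₅, pt3] at h0 h1 h2
    refine (show _ ∧ _ ∧ _ ∧ _ from ⟨?_, ?_, ?_, ?_⟩) <;> linarith
  · rintro ⟨ha, hb, hc, hd⟩
    refine ⟨2 * x 1, -x 1 - x 2 + 1, -x 0 - x 1 + 1, x 0 + x 2 - 1, ha, hb, hc, hd, by ring, fun i => ?_⟩
    fin_cases i <;> simp [bCtr, a₁, a₄, a₅, pt3] <;> ring

theorem mem6 (x : EuclideanSpace ℝ (Fin 3)) : x ∈ tet bCtr a₂ a₃ a₆ ↔ PE 6 (x 0) (x 1) (x 2) := by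
  rw [mem_tet_iff]
  constructor
  · rintro ⟨a, b, c, d, ha, hb, hc, hd, h, hi⟩
    have h0 := hi 0
    have h1 := hi 1
    have h2 := hi 2
    simp [bCtr, a₂, a₃, a₆, pt3] at h0 h1 h2
    refine (show _ ∧ _ ∧ _ ∧ _ from ⟨?_, ?_, ?_, ?_⟩) <;> linarith
  · rintro ⟨ha, hb, hc, hd⟩
    refine ⟨-2 * x 1 + 2, -x 0 - x 2 + 1, x 0 + x 1 - 1, x 1 + x 2 - 1, ha, hb, hc, hd, by ring, fun i => ?_⟩
    fin_cases i <;> simp [bCtr, a₂, a₃, a₆, pt3] <;> ring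

theorem mem7 (x : EuclideanSpace ℝ (Fin 3)) : x ∈ tet bCtr a₂ a₄ a₆ ↔ PE 7 (x 0) (x 1) (x 2) := by
  rw [mem_tet_iff]
  constructor
  · rintro ⟨a, b, c, d, ha, hb, hc, hd, h, hi⟩
    have h0 := hi 0
    have h1 := hi 1
    have h2 := hi 2
    simp [bCtr, a₂, a₄, a₆, pt3] at h0 h1 h2
    refine (show _ ∧ _ ∧ _ ∧ _ from ⟨?_, ?_, ?_, ?_⟩) <;> linarith
  · rintro ⟨ha, hb, hc, hd⟩
    refine ⟨2 * x 0, -x 0 - x 2 + 1, -x 0 - x 1 + 1, x 1 + x 2 - 1, ha, hb, hc, hd, by ring, fun i => ?_⟩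
    fin_cases i <;> simp [bCtr, a₂, a₄, a₆, pt3] <;> ring

theorem mem8 (x : EuclideanSpace ℝ (Fin 3)) : x ∈ tet bCtr a₃ a₅ a₇ ↔ PE 8 (x 0) (x 1) (x 2) := by
  rw [mem_tet_iff]
  constructor
  · rintro ⟨a, b, c, d, ha, hb, hc, hd, h, hi⟩
    have h0 := hi 0
    have h1 := hi 1
    have h2 := hi 2
    simp [bCtr, a₃, a₅, a₇, pt3] at h0 h1 h2
    refine (show _ ∧ _ ∧ _ ∧ _ from ⟨?_, ?_, ?_, ?_⟩) <;> linarith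
  · rintro ⟨ha, hb, hc, hd⟩
    refine ⟨-2 * x 0 + 2, x 0 - x 2, x 0 - x 1, x 1 + x 2 - 1, ha, hb, hc, hd, by ring, fun i => ?_⟩
    fin_cases i <;> simp [bCtr, a₃, a₅, a₇, pt3] <;> ring

theorem mem9 (x : EuclideanSpace ℝ (Fin 3)) : x ∈ tet bCtr a₃ a₆ a₇ ↔ PE 9 (x 0) (x 1) (x 2) := by
  rw [mem_tet_iff]
  constructor
  · rintro ⟨a, b, c, d, ha, hb, hc, hd, h, hi⟩
    have h0 := hi 0
    have h1 := hi 1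
    have h2 := hi 2
    simp [bCtr, a₃, a₆, a₇, pt3] at h0 h1 h2
    refine (show _ ∧ _ ∧ _ ∧ _ from ⟨?_, ?_, ?_, ?_⟩) <;> linarith
  · rintro ⟨ha, hb, hc, hd⟩
    refine ⟨-2 * x 1 + 2, x 1 - x 2, -x 0 + x 1, x 0 + x 2 - 1, ha, hb, hc, hd, by ring, fun i => ?_⟩
    fin_cases i <;> simp [bCtr, a₃, a₆, a₇, pt3] <;> ring

theorem mem10 (x : EuclideanSpace ℝ (Fin 3)) : x ∈ tet bCtr a₄ a₅ a₇ ↔ PE 10 (x 0) (x 1) (x 2) := by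
  rw [mem_tet_iff]
  constructor
  · rintro ⟨a, b, c, d, ha, hb, hc, hd, h, hi⟩
    have h0 := hi 0
    have h1 := hi 1
    have h2 := hi 2
    simp [bCtr, a₄, a₅, a₇, pt3] at h0 h1 h2
    refine (show _ ∧ _ ∧ _ ∧ _ from ⟨?_, ?_, ?_, ?_⟩) <;> linarith
  · rintro ⟨ha, hb, hc, hd⟩
    refine ⟨-2 * x 2 + 2, -x 0 + x 2, x 0 - x 1, x 1 + x 2 - 1, ha, hb, hc, hd, by ring, fun i => ?_⟩
    fin_cases i <;> simp [bCtr, a₄, a₅, a₇, pt3] <;> ring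

theorem mem11 (x : EuclideanSpace ℝ (Fin 3)) : x ∈ tet bCtr a₄ a₆ a₇ ↔ PE 11 (x 0) (x 1) (x 2) := by
  rw [mem_tet_iff]
  constructor
  · rintro ⟨a, b, c, d, ha, hb, hc, hd, h, hi⟩
    have h0 := hi 0
    have h1 := hi 1
    have h2 := hi 2
    simp [bCtr, a₄, a₆, a₇, pt3] at h0 h1 h2
    refine (show _ ∧ _ ∧ _ ∧ _ from ⟨?_, ?_, ?_, ?_⟩) <;> linarith
  · rintro ⟨ha, hb, hc, hd⟩
    refine ⟨-2 * x 2 + 2, -x 1 + x 2, -x 0 + x 1, x 0 + x 2 - 1, ha, hb, hc, hd, by ring, fun i => ?_⟩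
    fin_cases i <;> simp [bCtr, a₄, a₆, a₇, pt3] <;> ring

theorem mem_typeE (k : Fin 12) (x : EuclideanSpace ℝ (Fin 3)) :
    x ∈ typeE k ↔ PE k (x 0) (x 1) (x 2) := by
  fin_cases k
  exacts [mem0 x, mem1 x, mem2 x, mem3 x, mem4 x, mem5 x, mem6 x, mem7 x, mem8 x, mem9 x, mem10 x, mem11 x]

set_option maxHeartbeats 4000000 in
theorem interior_typeE (k : Fin 12) (x : EuclideanSpace ℝ (Fin 3)) (hx : x ∈ interior (typeE k)) :
    QE k (x 0) (x 1) (x 2) := by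
  obtain ⟨e, he, h⟩ := interior_push (fun y => (mem_typeE k y).1) hx
  generalize x 0 = X at *
  generalize x 1 = Y at *
  generalize x 2 = Z at *
  clear hx
  obtain ⟨⟨hA, hB⟩, ⟨hC, hD⟩, ⟨hE, hF⟩⟩ := h
  fin_cases k <;> obtain ⟨_, _, _, _⟩ := hA <;> obtain ⟨_, _, _, _⟩ := hB <;>
    obtain ⟨_, _, _, _⟩ := hC <;> obtain ⟨_, _, _, _⟩ := hD <;>
    obtain ⟨_, _, _, _⟩ := hE <;> obtain ⟨_, _, _, _⟩ := hF <;>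
    refine (show _ ∧ _ ∧ _ ∧ _ from ⟨?_, ?_, ?_, ?_⟩) <;> linarith

set_option maxHeartbeats 4000000 in
theorem QE_disjoint (X Y Z : ℝ) (k l : Fin 12) (hkl : k < l) (hk : QE k X Y Z) (hl : QE l X Y Z) :
    False := by
  fin_cases k <;> fin_cases l <;> first
    | exact absurd hkl (by decide)
    | (clear hkl
       obtain ⟨_, _, _, _⟩ := hk
       obtain ⟨_, _, _, _⟩ := hl
       linarith)

set_option maxHeartbeats 4000000 in
theorem PE_cover (X Y Z : ℝ) (hX : 0 ≤ X ∧ X ≤ 1) (hY : 0 ≤ Y ∧ Y ≤ 1) (hZ : 0 ≤ Z ∧ Z ≤ 1) :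
    ∃ k, PE k X Y Z := by
  obtain ⟨hX0, hX1⟩ := hX
  obtain ⟨hY0, hY1⟩ := hY
  obtain ⟨hZ0, hZ1⟩ := hZ
  rcases le_total X Y with h | h
  · rcases le_total (X + Y) 1 with h | h
    · rcases le_total Y Z with h | h
      · rcases le_total (X + Z) 1 with h | h
        · rcases le_total (Y + Z) 1 with h | h
          · exact ⟨3, by linarith, by linarith, by linarith, by linarith⟩
          · exact ⟨7, by linarith, by linarith, by linarith, by linarith⟩
        · exact ⟨11, by linarith, by linarith, by linarith, by linarith⟩
      · rcases le_total X Z with h | h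
        · rcases le_total (Y + Z) 1 with h | h
          · exact ⟨3, by linarith, by linarith, by linarith, by linarith⟩
          · exact ⟨7, by linarith, by linarith, by linarith, by linarith⟩
        · exact ⟨1, by linarith, by linarith, by linarith, by linarith⟩
    · rcases le_total X Z with h | h
      · rcases le_total Y Z with h | h
        · exact ⟨11, by linarith, by linarith, by linarith, by linarith⟩
        · rcases le_total (X + Z) 1 with h | h
          · exact ⟨6, by linarith, by linarith, by linarith, by linarith⟩
          · exact ⟨9, by linarith, by linarith, by linarith, by linarith⟩
      · rcases le_total (X + Z) 1 with h | h
        · rcases le_total (Y + Z) 1 with h | h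
          · exact ⟨1, by linarith, by linarith, by linarith, by linarith⟩
          · exact ⟨6, by linarith, by linarith, by linarith, by linarith⟩
        · exact ⟨9, by linarith, by linarith, by linarith, by linarith⟩
  · rcases le_total (X + Y) 1 with h | h
    · rcases le_total X Z with h | h
      · rcases le_total (X + Z) 1 with h | h
        · exact ⟨2, by linarith, by linarith, by linarith, by linarith⟩
        · rcases le_total (Y + Z) 1 with h | h
          · exact ⟨5, by linarith, by linarith, by linarith, by linarith⟩
          · exact ⟨10, by linarith, by linarith, by linarith, by linarith⟩
      · rcases le_total Y Z with h | h
        · rcases le_total (X + Z) 1 with h | h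
          · exact ⟨2, by linarith, by linarith, by linarith, by linarith⟩
          · exact ⟨5, by linarith, by linarith, by linarith, by linarith⟩
        · exact ⟨0, by linarith, by linarith, by linarith, by linarith⟩
    · rcases le_total Y Z with h | h
      · rcases le_total X Z with h | h
        · exact ⟨10, by linarith, by linarith, by linarith, by linarith⟩
        · rcases le_total (Y + Z) 1 with h | h
          · exact ⟨4, by linarith, by linarith, by linarith, by linarith⟩
          · exact ⟨8, by linarith, by linarith, by linarith, by linarith⟩
      · rcases le_total (X + Z) 1 with h | h
        · exact ⟨0, by linarith, by linarith, by linarith, by linarith⟩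
        · rcases le_total (Y + Z) 1 with h | h
          · exact ⟨4, by linarith, by linarith, by linarith, by linarith⟩
          · exact ⟨8, by linarith, by linarith, by linarith, by linarith⟩

set_option maxHeartbeats 4000000 in
theorem PE_sub (X Y Z : ℝ) (k : Fin 12) (h : PE k X Y Z) :
    (0 ≤ X ∧ X ≤ 1) ∧ (0 ≤ Y ∧ Y ≤ 1) ∧ (0 ≤ Z ∧ Z ≤ 1) := by
  fin_cases k <;> obtain ⟨_, _, _, _⟩ := h <;>
    refine ⟨⟨?_, ?_⟩, ⟨?_, ?_⟩, ⟨?_, ?_⟩⟩ <;> linarith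


/-- The twelve tetrahedra of the 'type E' triangulation of the unit cube,
`ba₀a₁a₃, ba₀a₂a₃, ba₀a₁a₄, ba₀a₂a₄, ba₁a₃a₅, ba₁a₄a₅, ba₂a₃a₆, ba₂a₄a₆, ba₃a₅a₇,
ba₃a₆a₇, ba₄a₅a₇, ba₄a₆a₇` (where `b = (1/2,1/2,1/2)` is the center), each have affinely
independent vertex sets, their union is `[0,1]³`, and they have pairwise disjoint
interiors. -/
theorem typeE_decomposition_of_cube :
    AffineIndependent ℝ ![bCtr, a₀, a₁, a₃] ∧ AffineIndependent ℝ ![bCtr, a₀, a₂, a₃] ∧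
    AffineIndependent ℝ ![bCtr, a₀, a₁, a₄] ∧ AffineIndependent ℝ ![bCtr, a₀, a₂, a₄] ∧
    AffineIndependent ℝ ![bCtr, a₁, a₃, a₅] ∧ AffineIndependent ℝ ![bCtr, a₁, a₄, a₅] ∧
    AffineIndependent ℝ ![bCtr, a₂, a₃, a₆] ∧ AffineIndependent ℝ ![bCtr, a₂, a₄, a₆] ∧
    AffineIndependent ℝ ![bCtr, a₃, a₅, a₇] ∧ AffineIndependent ℝ ![bCtr, a₃, a₆, a₇] ∧
    AffineIndependent ℝ ![bCtr, a₄, a₅, a₇] ∧ AffineIndependent ℝ ![bCtr, a₄, a₆, a₇] ∧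
    (⋃ k, typeE k) = unitCube ∧
    (∀ k l : Fin 12, k ≠ l → interior (typeE k) ∩ interior (typeE l) = ∅) := by
  have hu : (⋃ k, typeE k) = unitCube := by
    ext x
    simp only [Set.mem_iUnion, mem_typeE, unitCube, Set.mem_ofPred_eq, Set.mem_Icc]
    constructor
    · rintro ⟨k, hk⟩ i
      obtain ⟨h0, h1, h2⟩ := PE_sub _ _ _ k hk
      fin_cases i
      exacts [h0, h1, h2]
    · intro h
      exact PE_cover _ _ _ (h 0) (h 1) (h 2)
  have hd : ∀ k l : Fin 12, k ≠ l → interior (typeE k) ∩ interior (typeE l) = ∅ := by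
    intro k l hkl
    rw [Set.eq_empty_iff_forall_notMem]
    rintro x ⟨hk, hl⟩
    have hk := interior_typeE k x hk
    have hl := interior_typeE l x hl
    rcases lt_or_gt_of_ne hkl with h | h
    · exact QE_disjoint _ _ _ k l h hk hl
    · exact QE_disjoint _ _ _ l k h hl hk
  refine ⟨?_, ?_, ?_, ?_, ?_, ?_, ?_, ?_, ?_, ?_, ?_, ?_, hu, hd⟩ <;>
  · apply affInd_of
    intro a b c d h hi
    have h0 := hi 0
    have h1 := hi 1
    have h2 := hi 2
    simp [bCtr, a₀, a₁, a₂, a₃, a₄, a₅, a₆, a₇, pt3] at h0 h1 h2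
    refine ⟨?_, ?_, ?_, ?_⟩ <;> linarith
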